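/- For n ≥ 1 define the polynomials Y(x) := (1−x²)(1−k²x²), C_n := 2(α+β+n+3/2)·k²·(β_n+β_{n+1}) − 2[(β+n+1/2)k² + (α+n+1/2)] − 4k²·p1(n), M_n(x) := −2(α+β+n+1/2)·k²·x² − C_n, L_n(x) := x·[n·k²·x² − n(1+k²) + 2k²(α+β+n+1/2)·β_n − 2k²·p1(n)], and U_n(x) := −k²·x²·n(n+2α+2β+3) + 2k²(2n+2α+2β+1)·(p1(n)−β_n) + n·k²·(n+2β+1) + n(n+2α+1). Then the monic orthogonal polynomial P_n satisfies, identically in x, the second-order linear differential equation Y(x)·M_n(x)·P_n''(x) − [2x·((α+1)(1−k²x²) + k²(β+1)(1−x²))·M_n(x) + Y(x)·M_n'(x)]·P_n'(x) + [L_n(x)·M_n'(x) + M_n(x)·U_n(x)]·P_n(x) = 0 (this is the equation P_n'' + (X'/(2X) − M_n'/M_n)P_n' + (L_n M_n'/(Y M_n) + U_n/Y)P_n = 0 with X(x) = (1−x²)^{2α+2}(1−k²x²)^{2β+2}, cleared of denominators). -/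

import Mathlib

open MeasureTheory

/-- The quantity `C_n` appearing in the coefficients of the differential equation. -/
noncomputable def Caux (α β k2 : ℝ) (b p1 : ℕ → ℝ) (n : ℕ) : ℝ :=
  2 * (α + β + (n:ℝ) + 3/2) * k2 * (b n + b (n + 1))
    - 2 * ((β + (n:ℝ) + 1/2) * k2 + (α + (n:ℝ) + 1/2))
    - 4 * k2 * p1 n

/-!
The Pearson equation `(φ w)' = ψ w` for the even quartic `φ = Y` and an odd cubic `ψ` forces the
structure relation `Y P_n' = L_n P_n + M_n (x P_n - P_{n+1})`: the choice of the constants in `L_n`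
and `M_n` makes the difference of the two sides a polynomial of degree less than `n`, and
integrating by parts it is orthogonal to every `x ^ j` with `j < n`, so it vanishes. Comparing the
relation at consecutive indices with the three-term recurrence, the determinant of the system for
`P_n'` and `P_{n+1}'` telescopes in `n` to a multiple of `Y`. Differentiating the structure relation
and eliminating `P_{n+1}` gives the differential equation multiplied by `Y`.
-/

section SymmetricOPS

open Polynomial Finset

variable {R : Type*} [CommRing R]

theorem natDegree_X_mul_derivative_le (p : R[X]) : (X * derivative p).natDegree ≤ p.natDegree := by
  refine natDegree_le_iff_coeff_eq_zero.2 fun j hj => ?_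
  cases j with
  | zero => simp
  | succ j => rw [coeff_X_mul, coeff_derivative, coeff_eq_zero_of_natDegree_lt hj, zero_mul]

/-- The coefficients `-(b₀ + ⋯ + b_{n-1})` of `x^{n-2}` in the monic polynomials generated by
`x P_n = P_{n+1} + b_n P_{n-1}`; they are written `p1 n` in the paper. -/
def subleadingCoeff (b : ℕ → R) (n : ℕ) : R :=
  -∑ i ∈ range n, b i

@[simp]
theorem subleadingCoeff_zero (b : ℕ → R) : subleadingCoeff b 0 = 0 := by
  simp [subleadingCoeff]

theorem subleadingCoeff_succ (b : ℕ → R) (n : ℕ) :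
    subleadingCoeff b (n + 1) = subleadingCoeff b n - b n := by
  rw [subleadingCoeff, subleadingCoeff, sum_range_succ]
  ring

/-- The sequence of monic polynomials generated by `x P_n = P_{n+1} + b_n P_{n-1}`, `P_0 = 1`.
At `n = 0` the truncated index `n - 1` is harmless because `b 0 = 0`. -/
structure IsSymmetricRecurrence (P : ℕ → R[X]) (b : ℕ → R) : Prop where
  zero : P 0 = 1
  recurrenceCoeff_zero : b 0 = 0
  X_mul : ∀ n, X * P n = P (n + 1) + C (b n) * P (n - 1)

namespace IsSymmetricRecurrence

variable {P : ℕ → R[X]} {b : ℕ → R}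

theorem one (hP : IsSymmetricRecurrence P b) : P 1 = X := by
  simpa [hP.zero, hP.recurrenceCoeff_zero] using (hP.X_mul 0).symm

theorem add_two (hP : IsSymmetricRecurrence P b) (n : ℕ) :
    P (n + 2) = X * P (n + 1) - C (b (n + 1)) * P n := by
  rw [hP.X_mul, Nat.add_sub_cancel, add_sub_cancel_right]

-- The factor `X ^ 4` keeps all exponents natural numbers when `n < 4`.
theorem exists_X_pow_four_mul_eq (hP : IsSymmetricRecurrence P b) (n : ℕ) :
    ∃ r : R[X], r.natDegree ≤ n ∧
      X ^ 4 * P n = X ^ (n + 4) + C (subleadingCoeff b n) * X ^ (n + 2) + r := by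
  induction n using Nat.twoStepInduction with
  | zero => exact ⟨0, by simp, by simp [hP.zero]⟩
  | one =>
    exact ⟨0, by simp, by simp [hP.one, subleadingCoeff_succ, hP.recurrenceCoeff_zero]; ring⟩
  | more n ih₀ ih₁ =>
    obtain ⟨r₀, hr₀, h₀⟩ := ih₀
    obtain ⟨r₁, hr₁, h₁⟩ := ih₁
    refine ⟨X * r₁ - C (b (n + 1) * subleadingCoeff b n) * X ^ (n + 2) - C (b (n + 1)) * r₀,
      ?_, ?_⟩
    · compute_degree
      omega
    · rw [hP.add_two, subleadingCoeff_succ b (n + 1), C_sub, C_mul]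
      linear_combination X * h₁ - C (b (n + 1)) * h₀

theorem exists_X_pow_five_mul_derivative_eq (hP : IsSymmetricRecurrence P b) (n : ℕ) :
    ∃ t : R[X], t.natDegree ≤ n ∧ X ^ 5 * derivative (P n)
      = C (n : R) * X ^ (n + 4) + C ((n - 2) * subleadingCoeff b n) * X ^ (n + 2) + t := by
  obtain ⟨r, hr, h⟩ := hP.exists_X_pow_four_mul_eq n
  refine ⟨X * derivative r - 4 * r, ?_, ?_⟩
  · have hXr := (natDegree_X_mul_derivative_le r).trans hr
    have h4r : (4 * r).natDegree ≤ n := (natDegree_C_mul_le 4 r).trans hr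
    exact natDegree_sub_le_of_le hXr h4r |>.trans (max_self n).le
  · have hd := congrArg derivative h
    simp only [derivative_add, derivative_mul, derivative_C, derivative_X_pow, Nat.cast_add,
      Nat.cast_ofNat, C_add, C_ofNat, Nat.add_succ_sub_one] at hd
    simp only [C_mul, C_sub, C_ofNat]
    linear_combination X * hd - 4 * h

theorem coeff_of_lt (hP : IsSymmetricRecurrence P b) {n i : ℕ} (hi : n < i) :
    (P n).coeff i = 0 := by
  obtain ⟨r, hr, h⟩ := hP.exists_X_pow_four_mul_eq n
  rw [← coeff_X_pow_mul (P n) 4 i, h, coeff_add, coeff_add, coeff_C_mul, coeff_X_pow, coeff_X_pow,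
    if_neg (by omega), if_neg (by omega), coeff_eq_zero_of_natDegree_lt (by omega)]
  simp

theorem natDegree_le (hP : IsSymmetricRecurrence P b) (n : ℕ) : (P n).natDegree ≤ n :=
  natDegree_le_iff_coeff_eq_zero.2 fun _ => hP.coeff_of_lt

theorem coeff_self (hP : IsSymmetricRecurrence P b) (n : ℕ) : (P n).coeff n = 1 := by
  obtain ⟨r, hr, h⟩ := hP.exists_X_pow_four_mul_eq n
  rw [← coeff_X_pow_mul (P n) 4 n, h, coeff_add, coeff_add, coeff_C_mul, coeff_X_pow, coeff_X_pow,
    if_pos rfl, if_neg (by omega), coeff_eq_zero_of_natDegree_lt (by omega)]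
  simp

theorem coeff_add_two (hP : IsSymmetricRecurrence P b) (n : ℕ) :
    (P (n + 2)).coeff n = subleadingCoeff b (n + 2) := by
  obtain ⟨r, hr, h⟩ := hP.exists_X_pow_four_mul_eq (n + 2)
  rw [← coeff_X_pow_mul (P (n + 2)) 4 n, h, coeff_add, coeff_add, coeff_C_mul, coeff_X_pow,
    coeff_X_pow, if_neg (by omega), if_pos rfl, coeff_eq_zero_of_natDegree_lt (by omega)]
  simp

theorem eq_subleadingCoeff (hP : IsSymmetricRecurrence P b) {c : ℕ → R} (hc₀ : c 0 = 0)
    (hc₁ : c 1 = 0) (hc : ∀ n, 2 ≤ n → c n = (P n).coeff (n - 2)) : c = subleadingCoeff b := by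
  funext n
  match n with
  | 0 => rw [hc₀, subleadingCoeff_zero]
  | 1 => rw [hc₁, subleadingCoeff_succ, subleadingCoeff_zero, hP.recurrenceCoeff_zero, sub_zero]
  | n + 2 => rw [hc _ (by omega), Nat.add_sub_cancel, hP.coeff_add_two]

end IsSymmetricRecurrence

/-- Monic orthogonal polynomials of a quasi-definite symmetric moment functional `u`, with
recurrence coefficients `b`; symmetry of `u` is encoded by the absence of a diagonal term in the
recurrence. -/
structure IsSymmetricOPS (u : R[X] →ₗ[R] R) (P : ℕ → R[X]) (b : ℕ → R) : Prop
    extends IsSymmetricRecurrence P b where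
  orthogonal : ∀ m n, m ≠ n → u (P m * P n) = 0
  map_mul_self_ne_zero : ∀ n, u (P n * P n) ≠ 0

namespace IsSymmetricOPS

variable {u : R[X] →ₗ[R] R} {P : ℕ → R[X]} {b : ℕ → R}

theorem map_mul_X_pow_succ (hP : IsSymmetricOPS u P b) (n j : ℕ) :
    u (P n * X ^ (j + 1)) = u (P (n + 1) * X ^ j) + b n * u (P (n - 1) * X ^ j) := by
  rw [pow_succ', ← mul_assoc, mul_comm (P n), hP.X_mul, add_mul, map_add, mul_assoc,
    ← smul_eq_C_mul, map_smul, smul_eq_mul]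

theorem map_mul_X_pow_of_lt (hP : IsSymmetricOPS u P b) {n j : ℕ} (hj : j < n) :
    u (P n * X ^ j) = 0 := by
  induction j generalizing n with
  | zero => simpa [hP.zero] using hP.orthogonal n 0 hj.ne'
  | succ j ih => rw [hP.map_mul_X_pow_succ, ih (by omega), ih (by omega), mul_zero, add_zero]

theorem map_mul_X_pow_succ_succ (hP : IsSymmetricOPS u P b) (n : ℕ) :
    u (P (n + 1) * X ^ (n + 1)) = b (n + 1) * u (P n * X ^ n) := by
  rw [hP.map_mul_X_pow_succ, hP.map_mul_X_pow_of_lt (by omega), zero_add, Nat.add_sub_cancel]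

theorem map_mul_X_pow_add_one (hP : IsSymmetricOPS u P b) (n : ℕ) :
    u (P n * X ^ (n + 1)) = 0 := by
  induction n with
  | zero => simpa [hP.zero, hP.one] using hP.orthogonal 0 1 zero_ne_one
  | succ n ih =>
    rw [hP.map_mul_X_pow_succ, hP.map_mul_X_pow_of_lt (by omega), Nat.add_sub_cancel, ih, mul_zero,
      add_zero]

theorem map_mul_X_pow_add_two (hP : IsSymmetricOPS u P b) (n : ℕ) :
    u (P n * X ^ (n + 2)) = -subleadingCoeff b (n + 2) * u (P n * X ^ n) := by
  induction n with
  | zero =>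
    simp only [zero_add]
    rw [hP.map_mul_X_pow_succ, hP.map_mul_X_pow_succ_succ, hP.recurrenceCoeff_zero]
    simp [subleadingCoeff, sum_range_succ, hP.recurrenceCoeff_zero]
  | succ n ih =>
    rw [hP.map_mul_X_pow_succ, hP.map_mul_X_pow_succ_succ, Nat.add_sub_cancel, ih,
      hP.map_mul_X_pow_succ_succ, subleadingCoeff_succ b (n + 2)]
    ring

theorem map_mul_of_natDegree_le (hP : IsSymmetricOPS u P b) {n : ℕ} {p : R[X]}
    (hp : p.natDegree ≤ n) : u (P n * p) = p.coeff n * u (P n * X ^ n) := by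
  conv_lhs => rw [p.as_sum_range_C_mul_X_pow' (Nat.lt_succ_of_le hp), mul_sum, map_sum]
  simp only [← smul_eq_C_mul, mul_smul_comm, map_smul, smul_eq_mul]
  refine sum_eq_single_of_mem n (self_mem_range_succ n) fun j hj hjn => ?_
  rw [hP.map_mul_X_pow_of_lt (by grind), mul_zero]

theorem map_mul_X_pow_self_ne_zero (hP : IsSymmetricOPS u P b) (n : ℕ) :
    u (P n * X ^ n) ≠ 0 := by
  have h := hP.map_mul_self_ne_zero n
  rwa [hP.map_mul_of_natDegree_le (hP.natDegree_le n), hP.coeff_self, one_mul] at h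

theorem ne_zero (hP : IsSymmetricOPS u P b) (n : ℕ) : P n ≠ 0 := fun h =>
  hP.map_mul_self_ne_zero n (by rw [h, zero_mul, map_zero])

theorem eq_zero_of_map_mul_X_pow_eq_zero [NoZeroDivisors R] (hP : IsSymmetricOPS u P b) {n : ℕ}
    {p : R[X]} (hdeg : p.degree < n) (hmom : ∀ j < n, u (p * X ^ j) = 0) : p = 0 := by
  by_contra hp
  set d := p.natDegree
  have hdn : d < n := (natDegree_lt_iff_degree_lt hp).2 hdeg
  have hzero : u (P d * p) = 0 := by
    rw [(P d).as_sum_range_C_mul_X_pow' (Nat.lt_succ_of_le (hP.natDegree_le d)), sum_mul, map_sum]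
    refine sum_eq_zero fun j hj => ?_
    rw [mul_assoc, mul_comm (X ^ j), ← smul_eq_C_mul, map_smul,
      hmom j ((mem_range_succ_iff.1 hj).trans_lt hdn), smul_zero]
  rw [hP.map_mul_of_natDegree_le le_rfl] at hzero
  exact mul_ne_zero (leadingCoeff_ne_zero.2 hp) (hP.map_mul_X_pow_self_ne_zero d) hzero

theorem of_monic [NoZeroDivisors R] (hmonic : ∀ n, (P n).Monic) (hdeg : ∀ n, (P n).natDegree = n)
    (horth : ∀ m n, m ≠ n → u (P m * P n) = 0) (hnorm : ∀ n, u (P n * P n) ≠ 0) (hX : u X = 0)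
    (hb : b 0 = 0) (hrec : ∀ n, 1 ≤ n → X * P n = P (n + 1) + C (b n) * P (n - 1)) :
    IsSymmetricOPS u P b := by
  have hP0 : P 0 = 1 := (hmonic 0).natDegree_eq_zero.1 (hdeg 0)
  have hP1 : P 1 = X + C ((P 1).coeff 0) := (hmonic 1).eq_X_add_C (hdeg 1)
  have hu1 : u 1 ≠ 0 := by simpa [hP0] using hnorm 0
  have hcoeff : (P 1).coeff 0 = 0 := by
    have h10 := horth 1 0 one_ne_zero
    rw [hP0, mul_one, hP1, map_add, hX, zero_add, ← mul_one (C _), ← smul_eq_C_mul, map_smul,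
      smul_eq_mul] at h10
    exact (mul_eq_zero.1 h10).resolve_right hu1
  refine { zero := hP0, recurrenceCoeff_zero := hb, X_mul := fun n => ?_, orthogonal := horth,
           map_mul_self_ne_zero := hnorm }
  rcases Nat.eq_zero_or_pos n with rfl | hn
  · rw [hP0, hb, zero_add, hP1, hcoeff, C_0, zero_mul, add_zero, add_zero, mul_one]
  · exact hrec n hn

end IsSymmetricOPS

/-- The even quartic `φ = φ₀ + φ₂ x² + φ₄ x⁴` and the odd cubic `ψ = ψ₁ x + ψ₃ x³` of a symmetric
Pearson equation `(φ w)' = ψ w`. -/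
structure SymmetricPearson (R : Type*) where
  φ₀ : R
  φ₂ : R
  φ₄ : R
  ψ₁ : R
  ψ₃ : R

namespace SymmetricPearson

/-- The polynomial `φ` of the Pearson equation. -/
noncomputable def φ (D : SymmetricPearson R) : R[X] :=
  C D.φ₀ + C D.φ₂ * X ^ 2 + C D.φ₄ * X ^ 4

/-- The polynomial `ψ` of the Pearson equation. -/
noncomputable def ψ (D : SymmetricPearson R) : R[X] :=
  C D.ψ₁ * X + C D.ψ₃ * X ^ 3

/-- The weak form of the Pearson equation `(φ u)' = ψ u` for a moment functional `u`. -/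
def IsSolution (D : SymmetricPearson R) (u : R[X] →ₗ[R] R) : Prop :=
  ∀ p, u (D.φ * derivative p + D.ψ * p) = 0

variable (D : SymmetricPearson R) (b : ℕ → R) (n : ℕ)

/-- The quadratic coefficient of `ladderM`. -/
def ladderM₂ : R :=
  -(D.ψ₃ + (2 * n - 3) * D.φ₄)

/-- The constant coefficient of `ladderM`; it is `-C_n` in the notation of the paper. -/
def ladderM₀ : R :=
  4 * D.φ₄ * subleadingCoeff b n + (D.ladderM₂ n - 2 * D.φ₄) * (b n + b (n + 1))
    - D.ψ₁ - (2 * n - 1) * D.φ₂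

/-- The linear coefficient of `ladderL`. -/
def ladderL₁ : R :=
  n * D.φ₂ - 2 * D.φ₄ * subleadingCoeff b n - D.ladderM₂ n * b n

/-- The coefficient `M_n` in the structure relation `φ P_n' = L_n P_n + b_n M_n P_{n-1}`. -/
noncomputable def ladderM : R[X] :=
  C (D.ladderM₂ n) * X ^ 2 + C (D.ladderM₀ b n)

/-- The coefficient `L_n` in the structure relation `φ P_n' = L_n P_n + b_n M_n P_{n-1}`. -/
noncomputable def ladderL : R[X] :=
  X * (C (n * D.φ₄) * X ^ 2 + C (D.ladderL₁ b n))

/-- The polynomial `U_n` in the coefficient of `P_n` in the differential equation. -/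
noncomputable def odeU : R[X] :=
  -C (n * (D.ψ₃ + (n - 1) * D.φ₄)) * X ^ 2
    - C (2 * D.ladderM₂ n * subleadingCoeff b (n + 1) + n * (D.ψ₁ + (n - 1) * D.φ₂))

theorem ladderL_succ_add : D.ladderL b (n + 1) + D.ladderL b n + D.ψ - derivative D.φ
    + X * D.ladderM b n = 0 := by
  simp only [ladderL, ladderL₁, ladderM, ladderM₀, ladderM₂, φ, ψ, subleadingCoeff_succ,
    derivative_add, derivative_mul, derivative_C, derivative_X_pow, Nat.cast_add, Nat.cast_one,
    Nat.cast_ofNat, C_add, C_sub, C_neg, C_mul, C_ofNat, C_1]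
  ring

theorem derivative_ladderL :
    derivative (D.ladderL b n) = C (3 * n * D.φ₄) * X ^ 2 + C (D.ladderL₁ b n) := by
  simp only [ladderL, derivative_add, derivative_mul, derivative_C, derivative_X_pow, derivative_X,
    Nat.cast_ofNat, C_mul, C_ofNat]
  ring

theorem derivative_ladderM : derivative (D.ladderM b n) = C (2 * D.ladderM₂ n) * X := by
  simp only [ladderM, derivative_add, derivative_mul, derivative_C, derivative_X_pow,
    Nat.cast_ofNat, C_mul, C_ofNat]
  ring

theorem odeU_succ : D.odeU b (n + 1) + derivative (D.ladderL b (n + 1))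
    = D.odeU b n + derivative (D.ladderL b n) + D.ladderM b n := by
  simp only [derivative_ladderL, odeU, ladderL₁, ladderM, ladderM₀, ladderM₂, subleadingCoeff_succ,
    Nat.cast_add, Nat.cast_one, C_add, C_sub, C_neg, C_mul, C_ofNat, C_1]
  ring

theorem ladderL_zero (hb : b 0 = 0) : D.ladderL b 0 = 0 := by
  simp [ladderL, ladderL₁, hb]

theorem odeU_zero (hb : b 0 = 0) : D.odeU b 0 = 0 := by
  simp [odeU, subleadingCoeff_succ, hb]

/-- The defect of the structure relation, with `b_n P_{n-1}` written as `x P_n - P_{n+1}`. -/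
noncomputable def structureDefect (P : ℕ → R[X]) : R[X] :=
  D.φ * derivative (P n) - D.ladderL b n * P n - D.ladderM b n * (X * P n - P (n + 1))

theorem natDegree_φ_le : D.φ.natDegree ≤ 4 := by
  rw [φ]
  compute_degree

theorem natDegree_ladderL_le : (D.ladderL b n).natDegree ≤ 3 := by
  rw [ladderL]
  compute_degree

theorem natDegree_ladderM_le : (D.ladderM b n).natDegree ≤ 2 := by
  rw [ladderM]
  compute_degree

variable {b n}

-- The value of `ladderL₁` is the one that cancels the coefficient of `x ^ (n + 1)` in the defect.
theorem X_pow_five_mul_structureDefect {P : ℕ → R[X]} {r s t : R[X]}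
    (hr : X ^ 4 * P n = X ^ (n + 4) + C (subleadingCoeff b n) * X ^ (n + 2) + r)
    (hs : X ^ 4 * P (n + 1)
      = X ^ (n + 1 + 4) + C (subleadingCoeff b (n + 1)) * X ^ (n + 1 + 2) + s)
    (ht : X ^ 5 * derivative (P n)
      = C (n : R) * X ^ (n + 4) + C ((n - 2) * subleadingCoeff b n) * X ^ (n + 2) + t) :
    X ^ 5 * D.structureDefect b n P
      = C (n * D.φ₀ + ((n - 2) * D.φ₂ - D.ladderL₁ b n) * subleadingCoeff b n
            - D.ladderM₀ b n * b n) * X ^ (n + 4)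
        + C ((n - 2) * D.φ₀ * subleadingCoeff b n) * X ^ (n + 2)
        + (D.φ * t - (D.ladderL b n + X * D.ladderM b n) * (X * r)
          + D.ladderM b n * (X * s)) := by
  have hcancel : C (D.ladderL₁ b n)
      = C (n * D.φ₂ - 2 * D.φ₄ * subleadingCoeff b n - D.ladderM₂ n * b n) := rfl
  rw [subleadingCoeff_succ] at hs
  rw [structureDefect]
  simp only [φ, ladderL, ladderM, C_add, C_sub, C_mul, C_ofNat] at hs ht hcancel ⊢
  linear_combination (C D.φ₀ + C D.φ₂ * X ^ 2 + C D.φ₄ * X ^ 4) * ht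
    - X ^ 2 * (C (n : R) * C D.φ₄ * X ^ 2 + C (D.ladderL₁ b n)
      + (C (D.ladderM₂ n) * X ^ 2 + C (D.ladderM₀ b n))) * hr
    + X * (C (D.ladderM₂ n) * X ^ 2 + C (D.ladderM₀ b n)) * hs - X ^ (n + 6) * hcancel

theorem degree_structureDefect_lt {P : ℕ → R[X]} (hP : IsSymmetricRecurrence P b) :
    (D.structureDefect b n P).degree < n := by
  obtain ⟨r, hr, hPn⟩ := hP.exists_X_pow_four_mul_eq n
  obtain ⟨s, hs, hPsucc⟩ := hP.exists_X_pow_four_mul_eq (n + 1)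
  obtain ⟨t, ht, hderiv⟩ := hP.exists_X_pow_five_mul_derivative_eq n
  have hφ := D.natDegree_φ_le
  have hL := D.natDegree_ladderL_le b n
  have hM := D.natDegree_ladderM_le b n
  have hnatDegree : (X ^ 5 * D.structureDefect b n P).natDegree ≤ n + 4 := by
    rw [D.X_pow_five_mul_structureDefect hPn hPsucc hderiv]
    compute_degree
    all_goals omega
  refine (degree_lt_iff_coeff_zero _ _).2 fun i hi => ?_
  rw [← coeff_X_pow_mul _ 5, coeff_eq_zero_of_natDegree_lt (by omega)]

theorem structureDefect_mul_X_pow (P : ℕ → R[X]) (j : ℕ) :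
    D.structureDefect b n P * X ^ j
      = (D.φ * derivative (P n * X ^ j) + D.ψ * (P n * X ^ j))
        - (j * D.φ₀) • (P n * X ^ (j - 1))
        - (j * D.φ₂ + D.ψ₁ + D.ladderL₁ b n + D.ladderM₀ b n) • (P n * X ^ (j + 1))
        - ((j + n) * D.φ₄ + D.ψ₃ + D.ladderM₂ n) • (P n * X ^ (j + 3))
        + D.ladderM₂ n • (P (n + 1) * X ^ (j + 2))
        + D.ladderM₀ b n • (P (n + 1) * X ^ j) := by
  have hX : C (j : R) * X ^ (j - 1) * X = C (j : R) * X ^ j := by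
    cases j <;> simp [pow_succ, mul_assoc]
  simp only [structureDefect, ladderL, ladderM, φ, ψ, smul_eq_C_mul, derivative_mul,
    derivative_X_pow, C_add, C_mul]
  linear_combination -P n * (C D.φ₂ * X + C D.φ₄ * X ^ 3) * hX

section IsSolution

variable {D : SymmetricPearson R} {u : R[X] →ₗ[R] R} {P : ℕ → R[X]} {b : ℕ → R}

theorem IsSolution.map_structureDefect_mul_X_pow (hu : D.IsSolution u) (hP : IsSymmetricOPS u P b)
    {n j : ℕ} (hj : j < n) : u (D.structureDefect b n P * X ^ j) = 0 := by
  have hcases : n = j + 1 ∨ n = j + 2 ∨ n = j + 3 ∨ j + 3 < n := by omega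
  rw [D.structureDefect_mul_X_pow]
  simp only [map_add, map_sub, map_smul, smul_eq_mul, hu (P n * X ^ j),
    hP.map_mul_X_pow_of_lt (show j - 1 < n by omega),
    hP.map_mul_X_pow_of_lt (show j < n + 1 by omega)]
  rcases hcases with rfl | rfl | rfl | hj3
  · rw [hP.map_mul_X_pow_succ_succ (j + 1), hP.map_mul_X_pow_add_two (j + 1), ladderL₁, ladderM₀,
      ladderM₂]
    simp only [subleadingCoeff_succ]
    push_cast
    ring
  · rw [hP.map_mul_X_pow_add_one (j + 2), hP.map_mul_X_pow_of_lt (show j + 1 < j + 2 by omega),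
      hP.map_mul_X_pow_of_lt (show j + 2 < j + 2 + 1 by omega)]
    ring
  · rw [hP.map_mul_X_pow_of_lt (show j + 1 < j + 3 by omega),
      hP.map_mul_X_pow_of_lt (show j + 2 < j + 3 + 1 by omega), ladderM₂]
    push_cast
    ring
  · rw [hP.map_mul_X_pow_of_lt (by omega), hP.map_mul_X_pow_of_lt (by omega),
      hP.map_mul_X_pow_of_lt (by omega)]
    ring

variable [NoZeroDivisors R]

theorem IsSolution.structure_relation (hu : D.IsSolution u) (hP : IsSymmetricOPS u P b) (n : ℕ) :
    D.φ * derivative (P n) = D.ladderL b n * P n + D.ladderM b n * (X * P n - P (n + 1)) := by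
  have h : D.structureDefect b n P = 0 := hP.eq_zero_of_map_mul_X_pow_eq_zero
    (D.degree_structureDefect_lt hP.toIsSymmetricRecurrence)
    fun _ => hu.map_structureDefect_mul_X_pow hP
  rw [structureDefect] at h
  linear_combination h

theorem IsSolution.structure_relation_succ (hu : D.IsSolution u) (hP : IsSymmetricOPS u P b)
    (n : ℕ) : D.φ * derivative (P (n + 1))
      = D.ladderL b (n + 1) * P (n + 1) + C (b (n + 1)) * D.ladderM b (n + 1) * P n := by
  rw [hu.structure_relation hP, hP.add_two]
  ring

theorem IsSolution.ladderM_compatibility (hu : D.IsSolution u) (hP : IsSymmetricOPS u P b)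
    (n : ℕ) : D.φ + X * (D.ladderL b (n + 1) - D.ladderL b (n + 2))
      = C (b (n + 2)) * D.ladderM b (n + 2) - C (b (n + 1)) * D.ladderM b n := by
  refine mul_right_cancel₀ (hP.ne_zero (n + 1)) ?_
  have hrec := hP.add_two n
  have hrec' := congrArg derivative hrec
  simp only [derivative_sub, derivative_mul, derivative_X, derivative_C] at hrec'
  linear_combination hu.structure_relation_succ hP (n + 1) - D.φ * hrec'
    - X * hu.structure_relation_succ hP n + C (b (n + 1)) * hu.structure_relation hP n
    - C (b (n + 1)) * P n * (D.ladderL_succ_add b (n + 1) - D.ladderL_succ_add b n)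
    + D.ladderL b (n + 2) * hrec

theorem IsSolution.ladder_det (hu : D.IsSolution u) (hP : IsSymmetricOPS u P b) (n : ℕ) :
    (D.ladderL b n + X * D.ladderM b n) * D.ladderL b (n + 1)
        + C (b (n + 1)) * D.ladderM b n * D.ladderM b (n + 1)
      = D.φ * (D.odeU b n + derivative (D.ladderL b n) + D.ladderM b n) := by
  induction n with
  | zero =>
    have h₁ := hu.structure_relation_succ hP 0
    rw [zero_add, hP.one, hP.zero, derivative_X] at h₁
    rw [zero_add, D.ladderL_zero b hP.recurrenceCoeff_zero, D.odeU_zero b hP.recurrenceCoeff_zero,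
      derivative_zero]
    linear_combination -D.ladderM b 0 * h₁
  | succ n ih =>
    linear_combination ih
      + D.ladderL b (n + 1) * (D.ladderL_succ_add b (n + 1) - D.ladderL_succ_add b n)
      - D.ladderM b (n + 1) * hu.ladderM_compatibility hP n - D.φ * D.odeU_succ b n

theorem IsSolution.ode (hu : D.IsSolution u) (hP : IsSymmetricOPS u P b) (hφ : D.φ ≠ 0) (n : ℕ) :
    D.φ * D.ladderM b n * derivative (derivative (P n))
      + (D.ψ * D.ladderM b n - D.φ * derivative (D.ladderM b n)) * derivative (P n)
      + (D.ladderL b n * derivative (D.ladderM b n) + D.ladderM b n * D.odeU b n) * P n = 0 := by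
  refine (mul_eq_zero.1 ?_).resolve_left hφ
  have h := hu.structure_relation hP n
  have h' := congrArg derivative h
  simp only [derivative_add, derivative_sub, derivative_mul, derivative_X] at h'
  linear_combination D.φ * D.ladderM b n * h'
    - D.ladderM b n ^ 2 * hu.structure_relation_succ hP n
    - (D.φ * derivative (D.ladderM b n) + D.ladderM b n * D.ladderL b (n + 1)) * h
    - D.ladderM b n * P n * hu.ladder_det hP n
    + D.ladderM b n * D.φ * derivative (P n) * D.ladderL_succ_add b n

end IsSolution

end SymmetricPearson

end SymmetricOPS

section Weight

open Polynomial Set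

theorem intervalIntegral_id_mul_of_even {w : ℝ → ℝ} (hw : ∀ x, w (-x) = w x) (a : ℝ) :
    ∫ x in -a..a, x * w x = 0 := by
  have h := intervalIntegral.integral_comp_neg (a := -a) (b := a) fun x => x * w x
  simp only [hw, neg_mul, intervalIntegral.integral_neg, neg_neg] at h
  linarith

variable {a b : ℝ} {w : ℝ → ℝ}

theorem intervalIntegrable_polynomial_eval_mul (hw : IntervalIntegrable w volume a b) (p : ℝ[X]) :
    IntervalIntegrable (fun x => p.eval x * w x) volume a b :=
  hw.continuousOn_mul p.continuous.continuousOn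

/-- The moment functional `p ↦ ∫ p w` of an integrable weight on an interval. -/
noncomputable def momentFunctional (hw : IntervalIntegrable w volume a b) : ℝ[X] →ₗ[ℝ] ℝ where
  toFun p := ∫ x in a..b, p.eval x * w x
  map_add' p q := by
    simp only [eval_add, add_mul]
    exact intervalIntegral.integral_add (intervalIntegrable_polynomial_eval_mul hw p)
      (intervalIntegrable_polynomial_eval_mul hw q)
  map_smul' c p := by simp [mul_assoc]

theorem momentFunctional_apply (hw : IntervalIntegrable w volume a b) (p : ℝ[X]) :
    momentFunctional hw p = ∫ x in a..b, p.eval x * w x :=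
  rfl

theorem momentFunctional_pearson {φ ψ : ℝ[X]} (hw : IntervalIntegrable w volume a b) (hab : a ≤ b)
    (hcont : ContinuousOn (fun x => φ.eval x * w x) (Icc a b))
    (hderiv : ∀ x ∈ Ioo a b, HasDerivAt (fun x => φ.eval x * w x) (ψ.eval x * w x) x)
    (ha : φ.eval a * w a = 0) (hb : φ.eval b * w b = 0) (p : ℝ[X]) :
    momentFunctional hw (φ * derivative p + ψ * p) = 0 := by
  rw [momentFunctional_apply, intervalIntegral.integral_eq_sub_of_hasDerivAt_of_le
    (f := fun x => φ.eval x * w x * p.eval x) hab (hcont.mul p.continuous.continuousOn) ?_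
    (intervalIntegrable_polynomial_eval_mul hw _), ha, hb, zero_mul, zero_mul, sub_self]
  intro x hx
  refine ((hderiv x hx).mul (p.hasDerivAt x)).congr_deriv ?_
  simp only [eval_add, eval_mul]
  ring

end Weight

section JacobiWeight

open Polynomial Set

variable {α β k : ℝ} {w : ℝ → ℝ}

/-- The Pearson equation of the weight `(1 - x²) ^ α * (1 - k x²) ^ β`; here `φ` is the polynomial
`Y = (1 - x²)(1 - k x²)` of the paper. -/
def jacobiPearson (α β k : ℝ) : SymmetricPearson ℝ where
  φ₀ := 1
  φ₂ := -(1 + k)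
  φ₄ := k
  ψ₁ := -(2 * (α + 1) + 2 * k * (β + 1))
  ψ₃ := 2 * k * (α + β + 2)

theorem eval_φ_jacobiPearson (x : ℝ) :
    (jacobiPearson α β k).φ.eval x = (1 - x ^ 2) * (1 - k * x ^ 2) := by
  simp only [SymmetricPearson.φ, jacobiPearson, eval_add, eval_mul, eval_pow, eval_C, eval_X]
  ring

theorem eval_ψ_jacobiPearson (x : ℝ) : (jacobiPearson α β k).ψ.eval x
    = -(2 * x * ((α + 1) * (1 - k * x ^ 2) + k * (β + 1) * (1 - x ^ 2))) := by
  simp only [SymmetricPearson.ψ, jacobiPearson, eval_add, eval_mul, eval_pow, eval_C, eval_X]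
  ring

theorem φ_jacobiPearson_ne_zero : (jacobiPearson α β k).φ ≠ 0 := fun h => by
  simpa [h] using eval_φ_jacobiPearson (α := α) (β := β) (k := k) 0

theorem one_sub_mul_sq_pos (hk : k < 1) {x : ℝ} (hx : x ∈ Icc (-1 : ℝ) 1) : 0 < 1 - k * x ^ 2 := by
  have hx2 : x ^ 2 ≤ 1 := (sq_le_one_iff_abs_le_one x).2 (abs_le.2 hx)
  rcases le_or_gt k 0 with hk0 | hk0 <;> nlinarith [sq_nonneg x]

theorem eval_φ_jacobiPearson_mul_weight (hα : -1 < α) (hk : k < 1)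
    (hw : ∀ x, w x = (1 - x ^ 2) ^ α * (1 - k * x ^ 2) ^ β) {x : ℝ} (hx : x ∈ Icc (-1 : ℝ) 1) :
    (jacobiPearson α β k).φ.eval x * w x
      = (1 - x ^ 2) ^ (α + 1) * (1 - k * x ^ 2) ^ (β + 1) := by
  have hx2 : 0 ≤ 1 - x ^ 2 := sub_nonneg.2 ((sq_le_one_iff_abs_le_one x).2 (abs_le.2 hx))
  rw [eval_φ_jacobiPearson, hw, Real.rpow_add_one' hx2 (by linarith),
    Real.rpow_add_one (one_sub_mul_sq_pos hk hx).ne']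
  ring

theorem continuousOn_φ_jacobiPearson_mul_weight (hα : -1 < α) (hk : k < 1)
    (hw : ∀ x, w x = (1 - x ^ 2) ^ α * (1 - k * x ^ 2) ^ β) :
    ContinuousOn (fun x => (jacobiPearson α β k).φ.eval x * w x) (Icc (-1) 1) := by
  refine ContinuousOn.congr ?_ fun x hx => eval_φ_jacobiPearson_mul_weight hα hk hw hx
  exact .mul (.rpow_const (by fun_prop) fun x _ => .inr (by linarith))
    (.rpow_const (by fun_prop) fun x hx => .inl (one_sub_mul_sq_pos hk hx).ne')

theorem hasDerivAt_φ_jacobiPearson_mul_weight (hα : -1 < α) (hk : k < 1)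
    (hw : ∀ x, w x = (1 - x ^ 2) ^ α * (1 - k * x ^ 2) ^ β) {x : ℝ} (hx : x ∈ Ioo (-1 : ℝ) 1) :
    HasDerivAt (fun x => (jacobiPearson α β k).φ.eval x * w x)
      ((jacobiPearson α β k).ψ.eval x * w x) x := by
  have hA : 0 < 1 - x ^ 2 := sub_pos.2 ((sq_lt_one_iff_abs_lt_one x).2 (abs_lt.2 hx))
  have hB : 0 < 1 - k * x ^ 2 := one_sub_mul_sq_pos hk (Ioo_subset_Icc_self hx)
  have hdA : HasDerivAt (fun y : ℝ => 1 - y ^ 2) (-(2 * x)) x := by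
    simpa using (hasDerivAt_pow 2 x).const_sub 1
  have hdB : HasDerivAt (fun y : ℝ => 1 - k * y ^ 2) (-(k * (2 * x))) x := by
    simpa using ((hasDerivAt_pow 2 x).const_mul k).const_sub 1
  have hderiv := (hdA.rpow_const (p := α + 1) (.inl hA.ne')).mul
    (hdB.rpow_const (p := β + 1) (.inl hB.ne'))
  refine (hderiv.congr_deriv ?_).congr_of_eventuallyEq ?_
  · rw [eval_ψ_jacobiPearson, hw, add_sub_cancel_right, add_sub_cancel_right,
      Real.rpow_add_one hA.ne', Real.rpow_add_one hB.ne']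
    ring
  · filter_upwards [Icc_mem_nhds hx.1 hx.2] with y hy
    exact eval_φ_jacobiPearson_mul_weight hα hk hw hy

theorem isSolution_jacobiPearson (hα : -1 < α) (hk : k < 1)
    (hw : ∀ x, w x = (1 - x ^ 2) ^ α * (1 - k * x ^ 2) ^ β)
    (hwi : IntervalIntegrable w volume (-1) 1) :
    (jacobiPearson α β k).IsSolution (momentFunctional hwi) :=
  momentFunctional_pearson hwi (by norm_num)
    (continuousOn_φ_jacobiPearson_mul_weight hα hk hw)
    (fun _ => hasDerivAt_φ_jacobiPearson_mul_weight hα hk hw)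
    (by simp [eval_φ_jacobiPearson]) (by simp [eval_φ_jacobiPearson])

theorem eval_ladderM_jacobiPearson (b : ℕ → ℝ) (n : ℕ) (x : ℝ) :
    ((jacobiPearson α β k).ladderM b n).eval x
      = -2 * (α + β + n + 1 / 2) * k * x ^ 2 - Caux α β k b (subleadingCoeff b) n := by
  simp only [SymmetricPearson.ladderM, SymmetricPearson.ladderM₀, SymmetricPearson.ladderM₂,
    jacobiPearson, Caux, eval_add, eval_mul, eval_pow, eval_C, eval_X]
  ring

theorem eval_derivative_ladderM_jacobiPearson (b : ℕ → ℝ) (n : ℕ) (x : ℝ) :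
    (derivative ((jacobiPearson α β k).ladderM b n)).eval x
      = -4 * (α + β + n + 1 / 2) * k * x := by
  simp only [SymmetricPearson.derivative_ladderM, SymmetricPearson.ladderM₂, jacobiPearson,
    eval_mul, eval_C, eval_X]
  ring

theorem eval_ladderL_jacobiPearson (b : ℕ → ℝ) (n : ℕ) (x : ℝ) :
    ((jacobiPearson α β k).ladderL b n).eval x
      = x * (n * k * x ^ 2 - n * (1 + k) + 2 * k * (α + β + n + 1 / 2) * b n
          - 2 * k * subleadingCoeff b n) := by
  simp only [SymmetricPearson.ladderL, SymmetricPearson.ladderL₁, SymmetricPearson.ladderM₂,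
    jacobiPearson, eval_add, eval_mul, eval_pow, eval_C, eval_X]
  ring

theorem eval_odeU_jacobiPearson (b : ℕ → ℝ) (n : ℕ) (x : ℝ) :
    ((jacobiPearson α β k).odeU b n).eval x
      = -k * x ^ 2 * n * (n + 2 * α + 2 * β + 3)
        + 2 * k * (2 * n + 2 * α + 2 * β + 1) * (subleadingCoeff b n - b n)
        + n * k * (n + 2 * β + 1) + n * (n + 2 * α + 1) := by
  simp only [SymmetricPearson.odeU, SymmetricPearson.ladderM₂, subleadingCoeff_succ,
    jacobiPearson, eval_sub, eval_neg, eval_mul, eval_pow, eval_C, eval_X]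
  ring

end JacobiWeight

theorem isSymmetricOPS_momentFunctional_of_even {a : ℝ} {w : ℝ → ℝ} (heven : ∀ x, w (-x) = w x)
    (hwi : IntervalIntegrable w volume (-a) a) {P : ℕ → Polynomial ℝ} {b : ℕ → ℝ}
    (hmonic : ∀ n, (P n).Monic) (hdeg : ∀ n, (P n).natDegree = n) {h : ℕ → ℝ} (hh : ∀ n, h n ≠ 0)
    (horth : ∀ m n : ℕ,
      (∫ x in -a..a, (P m).eval x * (P n).eval x * w x) = if m = n then h n else 0) (hb : b 0 = 0)
    (hrec : ∀ n, 1 ≤ n →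
      Polynomial.X * P n = P (n + 1) + Polynomial.C (b n) * P (n - 1)) :
    IsSymmetricOPS (momentFunctional hwi) P b := by
  have hmap (m n : ℕ) : momentFunctional hwi (P m * P n) = if m = n then h n else 0 := by
    simpa only [momentFunctional_apply, Polynomial.eval_mul] using horth m n
  refine .of_monic hmonic hdeg (fun m n hmn => by rw [hmap, if_neg hmn])
    (fun n => by rw [hmap, if_pos rfl]; exact hh n) ?_ hb hrec
  simpa only [momentFunctional_apply, Polynomial.eval_X] using
    intervalIntegral_id_mul_of_even heven a

theorem stmt_4_general
    (α β k2 : ℝ) (hα : -1 < α) (hk2 : k2 < 1)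
    (w : ℝ → ℝ)
    (hw : ∀ x : ℝ, w x = (1 - x ^ 2) ^ α * (1 - k2 * x ^ 2) ^ β)
    (P : ℕ → Polynomial ℝ)
    (hPmonic : ∀ n, (P n).Monic)
    (hPdeg : ∀ n, (P n).natDegree = n)
    (h : ℕ → ℝ) (hpos : ∀ n, 0 < h n)
    (horth : ∀ m n : ℕ,
      (∫ x in (-1:ℝ)..1, (P m).eval x * (P n).eval x * w x)
        = if m = n then h n else 0)
    (b : ℕ → ℝ) (hb0 : b 0 = 0)
    (hrec : ∀ n : ℕ, 1 ≤ n →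
      Polynomial.X * P n = P (n + 1) + Polynomial.C (b n) * P (n - 1))
    (p1 : ℕ → ℝ) (hp10 : p1 0 = 0) (hp11 : p1 1 = 0)
    (hp1 : ∀ n : ℕ, 2 ≤ n → p1 n = (P n).coeff (n - 2)) :
    ∀ (n : ℕ) (x : ℝ),
      ((1 - x ^ 2) * (1 - k2 * x ^ 2))
          * (-2 * (α + β + (n:ℝ) + 1/2) * k2 * x ^ 2 - Caux α β k2 b p1 n)
          * (((P n).derivative.derivative).eval x)
        - (2 * x * ((α + 1) * (1 - k2 * x ^ 2) + k2 * (β + 1) * (1 - x ^ 2))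
              * (-2 * (α + β + (n:ℝ) + 1/2) * k2 * x ^ 2 - Caux α β k2 b p1 n)
            + ((1 - x ^ 2) * (1 - k2 * x ^ 2))
              * (-4 * (α + β + (n:ℝ) + 1/2) * k2 * x))
          * ((P n).derivative.eval x)
        + ((x * ((n:ℝ) * k2 * x ^ 2 - (n:ℝ) * (1 + k2)
                + 2 * k2 * (α + β + (n:ℝ) + 1/2) * b n - 2 * k2 * p1 n))
              * (-4 * (α + β + (n:ℝ) + 1/2) * k2 * x)
            + (-2 * (α + β + (n:ℝ) + 1/2) * k2 * x ^ 2 - Caux α β k2 b p1 n)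
              * (-k2 * x ^ 2 * (n:ℝ) * ((n:ℝ) + 2 * α + 2 * β + 3)
                + 2 * k2 * (2 * (n:ℝ) + 2 * α + 2 * β + 1) * (p1 n - b n)
                + (n:ℝ) * k2 * ((n:ℝ) + 2 * β + 1)
                + (n:ℝ) * ((n:ℝ) + 2 * α + 1)))
          * ((P n).eval x)
        = 0 := by
  have hP0 : P 0 = 1 := (hPmonic 0).natDegree_eq_zero.1 (hPdeg 0)
  have hwi : IntervalIntegrable w volume (-1) 1 := by
    refine intervalIntegral.intervalIntegrable_of_integral_ne_zero (?_ : (∫ x in -1..1, w x) ≠ 0)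
    have h00 : (∫ x in -1..1, w x) = h 0 := by simpa [hP0] using horth 0 0
    exact h00 ▸ (hpos 0).ne'
  have hsol := isSolution_jacobiPearson hα hk2 hw hwi
  have hP := isSymmetricOPS_momentFunctional_of_even (fun x => by simp only [hw, neg_sq]) hwi
    hPmonic hPdeg (fun n => (hpos n).ne') horth hb0 hrec
  obtain rfl := hP.eq_subleadingCoeff hp10 hp11 hp1
  intro n x
  have hode := congrArg (Polynomial.eval x) (hsol.ode hP φ_jacobiPearson_ne_zero n)
  simp only [Polynomial.eval_add, Polynomial.eval_sub, Polynomial.eval_mul, Polynomial.eval_zero,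
    eval_φ_jacobiPearson, eval_ψ_jacobiPearson, eval_ladderM_jacobiPearson,
    eval_derivative_ladderM_jacobiPearson, eval_ladderL_jacobiPearson,
    eval_odeU_jacobiPearson] at hode
  linear_combination hode

/-- The monic orthogonal polynomials `P_n` satisfy (in denominator
cleared form) the second order linear ODE
`Y M_n P_n'' − [2x((α+1)(1−k²x²)+k²(β+1)(1−x²))M_n + Y M_n']P_n' + [L_n M_n' + M_n U_n]P_n = 0`. -/
theorem stmt_4
    (α β k2 : ℝ) (hα : -1 < α) (hk2 : k2 ∈ Set.Ioo (0:ℝ) 1)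
    (w : ℝ → ℝ)
    (hw : ∀ x : ℝ, w x = (1 - x ^ 2) ^ α * (1 - k2 * x ^ 2) ^ β)
    (P : ℕ → Polynomial ℝ)
    (hPmonic : ∀ n, (P n).Monic)
    (hPdeg : ∀ n, (P n).natDegree = n)
    (h : ℕ → ℝ) (hpos : ∀ n, 0 < h n)
    (horth : ∀ m n : ℕ,
      (∫ x in (-1:ℝ)..1, (P m).eval x * (P n).eval x * w x)
        = if m = n then h n else 0)
    (b : ℕ → ℝ) (hb0 : b 0 = 0)
    (hrec : ∀ n : ℕ, 1 ≤ n →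
      Polynomial.X * P n = P (n + 1) + Polynomial.C (b n) * P (n - 1))
    (p1 : ℕ → ℝ) (hp10 : p1 0 = 0) (hp11 : p1 1 = 0)
    (hp1 : ∀ n : ℕ, 2 ≤ n → p1 n = (P n).coeff (n - 2)) :
    ∀ n : ℕ, 1 ≤ n → ∀ x : ℝ,
      ((1 - x ^ 2) * (1 - k2 * x ^ 2))
          * (-2 * (α + β + (n:ℝ) + 1/2) * k2 * x ^ 2 - Caux α β k2 b p1 n)
          * (((P n).derivative.derivative).eval x)
        - (2 * x * ((α + 1) * (1 - k2 * x ^ 2) + k2 * (β + 1) * (1 - x ^ 2))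
              * (-2 * (α + β + (n:ℝ) + 1/2) * k2 * x ^ 2 - Caux α β k2 b p1 n)
            + ((1 - x ^ 2) * (1 - k2 * x ^ 2))
              * (-4 * (α + β + (n:ℝ) + 1/2) * k2 * x))
          * ((P n).derivative.eval x)
        + ((x * ((n:ℝ) * k2 * x ^ 2 - (n:ℝ) * (1 + k2)
                + 2 * k2 * (α + β + (n:ℝ) + 1/2) * b n - 2 * k2 * p1 n))
              * (-4 * (α + β + (n:ℝ) + 1/2) * k2 * x)
            + (-2 * (α + β + (n:ℝ) + 1/2) * k2 * x ^ 2 - Caux α β k2 b p1 n)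
              * (-k2 * x ^ 2 * (n:ℝ) * ((n:ℝ) + 2 * α + 2 * β + 3)
                + 2 * k2 * (2 * (n:ℝ) + 2 * α + 2 * β + 1) * (p1 n - b n)
                + (n:ℝ) * k2 * ((n:ℝ) + 2 * β + 1)
                + (n:ℝ) * ((n:ℝ) + 2 * α + 1)))
          * ((P n).eval x)
        = 0 :=
  fun n _ => stmt_4_general α β k2 hα hk2.2 w hw P hPmonic hPdeg h hpos horth b hb0 hrec
    p1 hp10 hp11 hp1 n
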